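/- arXiv:1901.06945 — 3 statements merged into one kernel-verified Lean document; each statement's English description precedes it below -/
import Mathlib

section
/- Consider cliques in Γ_{-2,0}, i.e. sets of roots whose pairwise dot products lie in {-2,0}. Every maximal clique in Γ_{-2,0} has size 16 and is of the form {e1,…,e8,-e1,…,-e8} for some pairwise orthogonal roots e1,…,e8; there are exactly 2025 maximal cliques in Γ_{-2,0}, and the Weyl group W acts transitively on the set of maximal cliques in Γ_{-2,0}. -/
noncomputable section

/-- The standard dot product on ℝ^8. -/
def dot (a b : Fin 8 → ℝ) : ℝ := ∑ i, a i * b i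

/-- Membership in the E8 lattice Λ: all coordinates are integers or all lie in ℤ + 1/2,
and the coordinates sum to an even integer. -/
def inLambda (a : Fin 8 → ℝ) : Prop :=
  ((∀ i, ∃ n : ℤ, a i = n) ∨ (∀ i, ∃ n : ℤ, a i = n + 1 / 2)) ∧
    ∃ n : ℤ, (∑ i, a i) = 2 * n

/-- The E8 root system E: lattice vectors of squared norm 2. -/
def isRoot (a : Fin 8 → ℝ) : Prop := inLambda a ∧ dot a a = 2

/-- The Weyl group W: linear isometries of ℝ^8 mapping the root system E onto itself. -/
def IsWeyl (w : (Fin 8 → ℝ) ≃ₗ[ℝ] (Fin 8 → ℝ)) : Prop :=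
  (∀ a b : Fin 8 → ℝ, dot (w a) (w b) = dot a b) ∧
    (⇑w '' {a | isRoot a} = {a | isRoot a})

/-- A clique in the colored graph `Γ_c`: a set of roots whose pairwise dot products
lie in the color set `c`. -/
def IsClique (c : Set ℝ) (K : Finset (Fin 8 → ℝ)) : Prop :=
  (∀ e ∈ K, isRoot e) ∧ ∀ e ∈ K, ∀ f ∈ K, e ≠ f → dot e f ∈ c

/-- A maximal clique in `Γ_c`: a clique not properly contained in another clique. -/
def IsMaxClique (c : Set ℝ) (K : Finset (Fin 8 → ℝ)) : Prop :=
  IsClique c K ∧ ∀ K' : Finset (Fin 8 → ℝ), IsClique c K' → K ⊆ K' → K' = K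

open scoped Pointwise

/-!
Let `s₀, …, s₇` be the frame `e₀ ± e₁, e₂ ± e₃, e₄ ± e₅, e₆ ± e₇`, and let `nₖ` be the number of
maximal cliques containing `s₀, …, sₖ₋₁`. For `k = 0, 1, 2, 4` the stabilizer of `s₀, …, sₖ₋₁` in
`W` is transitive on the `240, 126, 60, 24` roots orthogonal to them: each of these roots has, among
them, a common neighbour with `sₖ`, where neighbours are roots that are not orthogonal, and
reflections move neighbours to each other while fixing every vector orthogonal to both.
Hence a maximal clique through `s₀, …, sₖ₋₁` can be moved to one that also contains `sₖ`, and
double counting gives `nₖ (16 - 2 k) = Nₖ nₖ₊₁` with `Nₖ` the number of these roots. A maximal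
clique contains every root that has even products with all its members; this forces `s₃` to follow
from `s₀, s₁, s₂`, and `s₅, s₆, s₇` from `s₀, …, s₄`. So every maximal clique is conjugate to
`{± sᵢ}`, and `n₅ = 1`, `n₄ = n₃ = 3`, `n₂ = 15`, `n₁ = 135`, `n₀ = 2025`.
-/

/-! ### The lattice and its roots -/

section Lattice

variable {a b : Fin 8 → ℝ}

lemma dot_eq_dotProduct (a b : Fin 8 → ℝ) : dot a b = a ⬝ᵥ b := rfl

lemma dot_comm (a b : Fin 8 → ℝ) : dot a b = dot b a := dotProduct_comm a b

lemma dot_neg_left (a b : Fin 8 → ℝ) : dot (-a) b = -dot a b := neg_dotProduct a b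

lemma dot_neg_right (a b : Fin 8 → ℝ) : dot a (-b) = -dot a b := dotProduct_neg a b

/-- Since `8 * (k / 2)` is even, the parity condition on `a` becomes one on the integer part `n`. -/
lemma inLambda_iff_exists_int :
    inLambda a ↔ ∃ (k : ℤ) (n : Fin 8 → ℤ), Even (∑ i, n i) ∧ ∀ i, a i = n i + k / 2 := by
  constructor
  · rintro ⟨hint | hhalf, m, hm⟩
    · choose n hn using hint
      refine ⟨0, n, even_iff_two_dvd.2 ⟨m, ?_⟩, by simpa using hn⟩
      simp only [hn] at hm
      exact_mod_cast hm
    · choose n hn using hhalf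
      refine ⟨1, n, even_iff_two_dvd.2 ⟨m - 2, ?_⟩, by simpa using hn⟩
      have hsum : (∑ i, (n i : ℝ)) = 2 * (m - 2) := by
        simp only [hn, Finset.sum_add_distrib, Finset.sum_const, Finset.card_univ,
          Fintype.card_fin, nsmul_eq_mul, Nat.cast_ofNat] at hm
        linarith
      exact_mod_cast hsum
  · rintro ⟨k, n, hn, ha⟩
    constructor
    · obtain ⟨l, rfl | rfl⟩ := Int.even_or_odd' k
      · exact .inl fun i ↦ ⟨n i + l, by rw [ha]; push_cast; ring⟩
      · exact .inr fun i ↦ ⟨n i + l, by rw [ha]; push_cast; ring⟩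
    · obtain ⟨m, hm⟩ := even_iff_two_dvd.1 hn
      refine ⟨m + 2 * k, ?_⟩
      have hm' : (∑ i, (n i : ℝ)) = 2 * m := by exact_mod_cast hm
      simp only [ha, Finset.sum_add_distrib, hm', Finset.sum_const, Finset.card_univ,
        Fintype.card_fin, nsmul_eq_mul, Nat.cast_ofNat]
      push_cast
      ring

lemma inLambda.sub_zsmul (ha : inLambda a) (hb : inLambda b) (m : ℤ) :
    inLambda (a - m • b) := by
  obtain ⟨k, n, hn, ha⟩ := inLambda_iff_exists_int.1 ha
  obtain ⟨k', n', hn', hb⟩ := inLambda_iff_exists_int.1 hb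
  refine inLambda_iff_exists_int.2 ⟨k - m * k', n - m • n', ?_, fun i ↦ ?_⟩
  · simp only [Pi.sub_apply, Pi.smul_apply, smul_eq_mul, Finset.sum_sub_distrib, ← Finset.mul_sum]
    exact hn.sub (hn'.mul_left m)
  · rw [Pi.sub_apply, Pi.smul_apply, zsmul_eq_mul, ha, hb, Pi.sub_apply, Pi.smul_apply,
      smul_eq_mul]
    push_cast
    ring

lemma inLambda.exists_int_dot_eq (ha : inLambda a) (hb : inLambda b) : ∃ m : ℤ, dot a b = m := by
  obtain ⟨k, n, hn, ha⟩ := inLambda_iff_exists_int.1 ha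
  obtain ⟨k', n', hn', hb⟩ := inLambda_iff_exists_int.1 hb
  obtain ⟨l, hl⟩ := even_iff_two_dvd.1 hn
  obtain ⟨l', hl'⟩ := even_iff_two_dvd.1 hn'
  have hl : (∑ i, (n i : ℝ)) = 2 * l := by exact_mod_cast hl
  have hl' : (∑ i, (n' i : ℝ)) = 2 * l' := by exact_mod_cast hl'
  refine ⟨∑ i, n i * n' i + l * k' + k * l' + 2 * k * k', ?_⟩
  calc dot a b = ∑ i, ((n i * n' i : ℝ) + n i * (k' / 2) + k / 2 * n' i + k / 2 * (k' / 2)) :=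
        Finset.sum_congr rfl fun i _ ↦ by rw [ha, hb]; ring
    _ = _ := by
        simp only [Finset.sum_add_distrib, ← Finset.sum_mul, ← Finset.mul_sum, hl, hl',
          Finset.sum_const, Finset.card_univ, Fintype.card_fin, nsmul_eq_mul, Nat.cast_ofNat]
        push_cast
        ring

lemma isRoot.ne_zero (ha : isRoot a) : a ≠ 0 := by
  rintro rfl
  simpa [dot] using ha.2

lemma isRoot.neg (ha : isRoot a) : isRoot (-a) := by
  refine ⟨?_, by rw [dot_neg_left, dot_neg_right, neg_neg, ha.2]⟩
  rw [show -a = a - (2 : ℤ) • a by rw [two_zsmul]; abel]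
  exact ha.1.sub_zsmul ha.1 2

lemma isRoot.sub (ha : isRoot a) (hb : isRoot b) (hab : dot a b = 1) : isRoot (a - b) := by
  refine ⟨by simpa using ha.1.sub_zsmul hb.1 1, ?_⟩
  have haa := ha.2
  have hbb := hb.2
  simp only [dot_eq_dotProduct, sub_dotProduct, dotProduct_sub] at *
  rw [dotProduct_comm b a]
  linarith

lemma isRoot.dot_le_two (ha : isRoot a) (hb : isRoot b) : dot a b ≤ 2 := by
  have hnonneg : 0 ≤ dot (a - b) (a - b) := Finset.sum_nonneg fun i _ ↦ mul_self_nonneg _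
  have haa := ha.2
  have hbb := hb.2
  simp only [dot_eq_dotProduct, sub_dotProduct, dotProduct_sub] at *
  rw [dotProduct_comm b a] at hnonneg
  linarith

lemma isRoot.eq_of_dot_eq_two (ha : isRoot a) (hb : isRoot b) (hab : dot a b = 2) : a = b := by
  rw [← sub_eq_zero, ← dotProduct_self_eq_zero]
  have haa := ha.2
  have hbb := hb.2
  simp only [dot_eq_dotProduct, sub_dotProduct, dotProduct_sub] at *
  rw [dotProduct_comm b a]
  linarith

lemma isRoot.eq_neg_of_dot_eq_neg_two (ha : isRoot a) (hb : isRoot b) (hab : dot a b = -2) :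
    a = -b :=
  ha.eq_of_dot_eq_two hb.neg (by rw [dot_neg_right, hab, neg_neg])

lemma isRoot.dot_mem (ha : isRoot a) (hb : isRoot b) : dot a b ∈ ({-2, -1, 0, 1, 2} : Set ℝ) := by
  obtain ⟨m, hm⟩ := ha.1.exists_int_dot_eq hb.1
  have hle := ha.dot_le_two hb
  have hge := ha.neg.dot_le_two hb
  rw [dot_neg_left] at hge
  have : -2 ≤ m := by exact_mod_cast (by linarith : (-2 : ℝ) ≤ m)
  have : m ≤ 2 := by exact_mod_cast hm ▸ hle
  rw [hm]
  interval_cases m <;> norm_num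

end Lattice

/-! ### The Weyl group -/

section Weyl

variable {a b : Fin 8 → ℝ} {c : Set ℝ} {K : Finset (Fin 8 → ℝ)}

/-- The Weyl group `W`, as a subgroup of the linear automorphisms of `ℝ^8`. -/
def weylGroup : Subgroup ((Fin 8 → ℝ) ≃ₗ[ℝ] (Fin 8 → ℝ)) where
  carrier := {w | IsWeyl w}
  one_mem' := ⟨fun _ _ ↦ rfl, Set.image_id _⟩
  mul_mem' := by
    rintro v w ⟨hv, hvE⟩ ⟨hw, hwE⟩
    refine ⟨fun a b ↦ (hv _ _).trans (hw a b), ?_⟩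
    calc ⇑(v * w) '' {a | isRoot a} = v '' (w '' {a | isRoot a}) := Set.image_comp v w _
      _ = {a | isRoot a} := by rw [hwE, hvE]
  inv_mem' := by
    rintro w ⟨hw, hwE⟩
    refine ⟨fun a b ↦ ?_, ?_⟩
    · rw [← hw]
      exact congrArg₂ dot (w.apply_symm_apply a) (w.apply_symm_apply b)
    · conv_lhs => rw [← hwE]
      exact w.toEquiv.symm_image_image _

variable {w : (Fin 8 → ℝ) ≃ₗ[ℝ] (Fin 8 → ℝ)}

lemma dot_smul_smul (hw : w ∈ weylGroup) (a b : Fin 8 → ℝ) : dot (w • a) (w • b) = dot a b :=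
  hw.1 a b

lemma isRoot.smul (ha : isRoot a) (hw : w ∈ weylGroup) : isRoot (w • a) :=
  hw.2.subset ⟨a, ha, rfl⟩

lemma IsClique.smul (hK : IsClique c K) (hw : w ∈ weylGroup) : IsClique c (w • K) := by
  simp only [IsClique, Finset.mem_smul_finset, forall_exists_index, and_imp,
    forall_apply_eq_imp_iff₂, dot_smul_smul hw]
  exact ⟨fun e he ↦ (hK.1 e he).smul hw, fun e he f hf hef ↦ hK.2 e he f hf (hef <| · ▸ rfl)⟩

lemma IsMaxClique.smul (hK : IsMaxClique c K) (hw : w ∈ weylGroup) : IsMaxClique c (w • K) := by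
  refine ⟨hK.1.smul hw, fun K' hK' hsub ↦ ?_⟩
  have := hK.2 (w⁻¹ • K') (hK'.smul (inv_mem hw)) (Finset.smul_finset_subset_iff.1 hsub)
  rw [← this, smul_inv_smul]

lemma isMaxClique_smul_iff (hw : w ∈ weylGroup) : IsMaxClique c (w • K) ↔ IsMaxClique c K :=
  ⟨fun h ↦ by simpa using h.smul (inv_mem hw), fun h ↦ h.smul hw⟩

/-- The reflection in the hyperplane orthogonal to the root `r`. -/
def rootReflection (r : Fin 8 → ℝ) (hr : isRoot r) : (Fin 8 → ℝ) ≃ₗ[ℝ] (Fin 8 → ℝ) :=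
  Module.reflection (x := r) (f := dotProductBilin ℝ ℝ r) hr.2

lemma rootReflection_smul (hr : isRoot a) (x : Fin 8 → ℝ) :
    rootReflection a hr • x = x - dot a x • a := rfl

lemma rootReflection_smul_of_dot_eq_zero (hr : isRoot a) {x : Fin 8 → ℝ} (hx : dot a x = 0) :
    rootReflection a hr • x = x := by
  rw [rootReflection_smul, hx, zero_smul, sub_zero]

lemma rootReflection_smul_neg_self (hr : isRoot a) : rootReflection a hr • (-a) = a := by
  rw [rootReflection_smul, dot_neg_right, hr.2, neg_smul, two_smul]
  abel

lemma rootReflection_sub_smul (ha : isRoot a) (hb : isRoot b) (hab : dot a b = 1) :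
    rootReflection (a - b) (ha.sub hb hab) • a = b := by
  have hdot : dot (a - b) a = 1 := by
    have haa := ha.2
    simp only [dot_eq_dotProduct, sub_dotProduct] at *
    rw [dotProduct_comm b a]
    linarith
  rw [rootReflection_smul, hdot, one_smul, sub_sub_cancel]

lemma rootReflection_mem_weylGroup (hr : isRoot a) : rootReflection a hr ∈ weylGroup := by
  have hdot (x y) : dot (rootReflection a hr • x) (rootReflection a hr • y) = dot x y := by
    have haa := hr.2
    simp only [rootReflection_smul, dot_eq_dotProduct, sub_dotProduct, dotProduct_sub,
      smul_dotProduct, dotProduct_smul, smul_eq_mul] at *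
    rw [haa, dotProduct_comm x a]
    ring
  have hroot {x} (hx : isRoot x) : isRoot (rootReflection a hr • x) := by
    refine ⟨?_, (hdot x x).trans hx.2⟩
    obtain ⟨m, hm⟩ := hr.1.exists_int_dot_eq hx.1
    rw [rootReflection_smul, hm, Int.cast_smul_eq_zsmul]
    exact hx.1.sub_zsmul hr.1 m
  refine ⟨hdot, Set.Subset.antisymm (Set.image_subset_iff.2 fun x hx ↦ hroot hx) fun x hx ↦ ?_⟩
  exact ⟨_, hroot hx, Module.involutive_reflection _ x⟩

theorem exists_weyl_smul_eq_of_dot_ne_zero (ha : isRoot a) (hb : isRoot b) (hab : dot a b ≠ 0) :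
    ∃ w ∈ weylGroup, w • a = b ∧ ∀ x, dot a x = 0 → dot b x = 0 → w • x = x := by
  have hpos {b} (hb : isRoot b) (hab : 0 < dot a b) :
      ∃ w ∈ weylGroup, w • a = b ∧ ∀ x, dot a x = 0 → dot b x = 0 → w • x = x := by
    obtain h | h | h | h | h := ha.dot_mem hb
    iterate 3 linarith
    · refine ⟨_, rootReflection_mem_weylGroup (ha.sub hb h), rootReflection_sub_smul ha hb h,
        fun x hax hbx ↦ rootReflection_smul_of_dot_eq_zero _ ?_⟩
      rw [dot_eq_dotProduct, sub_dotProduct, ← dot_eq_dotProduct, ← dot_eq_dotProduct, hax, hbx,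
        sub_zero]
    · exact ⟨1, one_mem _, ha.eq_of_dot_eq_two hb h, fun x _ _ ↦ rfl⟩
  obtain hab | hab := hab.lt_or_gt
  · obtain ⟨w, hw, hwa, hfix⟩ := hpos hb.neg (by rw [dot_neg_right]; linarith)
    refine ⟨rootReflection b hb * w, mul_mem (rootReflection_mem_weylGroup hb) hw, ?_,
      fun x hax hbx ↦ ?_⟩
    · rw [mul_smul, hwa, rootReflection_smul_neg_self]
    · rw [mul_smul, hfix x hax (by rw [dot_neg_left, hbx, neg_zero]),
        rootReflection_smul_of_dot_eq_zero hb hbx]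
  · exact hpos hb hab

end Weyl


/-! ### Orthogonal frames -/

section Frame

variable {u v r : Fin 8 → ℝ} {c : Set ℝ} {K : Finset (Fin 8 → ℝ)}

lemma IsMaxClique.mem_of_forall_dot_mem (hK : IsMaxClique c K) (hr : isRoot r)
    (h : ∀ v ∈ K, v ≠ r → dot v r ∈ c) : r ∈ K := by
  have hinsert : IsClique c (insert r K) := by
    simp only [IsClique, Finset.forall_mem_insert, ne_eq, not_true_eq_false, false_implies,
      true_and]
    exact ⟨⟨hr, hK.1.1⟩, fun v hv hrv ↦ dot_comm r v ▸ h v hv (Ne.symm hrv),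
      fun v hv ↦ ⟨h v hv, hK.1.2 v hv⟩⟩
  exact hK.2 _ hinsert (Finset.subset_insert r K) ▸ Finset.mem_insert_self r K

lemma IsClique.exists_int_dot_eq_two_mul (hK : IsClique {-2, 0} K) (hu : u ∈ K) (hv : v ∈ K) :
    ∃ m : ℤ, dot u v = 2 * m := by
  obtain rfl | huv := eq_or_ne u v
  · exact ⟨1, by rw [(hK.1 u hu).2]; norm_num⟩
  · obtain h | h := hK.2 u hu v hv huv
    · exact ⟨-1, by rw [h]; norm_num⟩
    · exact ⟨0, by rw [h]; norm_num⟩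

lemma IsMaxClique.mem_of_forall_even_dot (hK : IsMaxClique {-2, 0} K) (hr : isRoot r)
    (h : ∀ v ∈ K, ∃ m : ℤ, dot v r = 2 * m) : r ∈ K := by
  refine hK.mem_of_forall_dot_mem hr fun v hv hvr ↦ ?_
  obtain ⟨m, hm⟩ := h v hv
  have hodd (n : ℤ) (hn : dot v r = n) (hn' : ¬ Even n) : False :=
    hn' (even_iff_two_dvd.2 ⟨m, by exact_mod_cast hn.symm.trans hm⟩)
  obtain h | h | h | h | h := (hK.1.1 v hv).dot_mem hr
  · exact .inl h
  · exact (hodd (-1) (by simpa using h) (by decide)).elim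
  · exact .inr h
  · exact (hodd 1 (by simpa using h) (by decide)).elim
  · exact (hvr ((hK.1.1 v hv).eq_of_dot_eq_two hr h)).elim

lemma IsMaxClique.neg_mem (hK : IsMaxClique {-2, 0} K) (hv : v ∈ K) : -v ∈ K := by
  refine hK.mem_of_forall_even_dot (hK.1.1 v hv).neg fun u hu ↦ ?_
  obtain ⟨m, hm⟩ := hK.1.exists_int_dot_eq_two_mul hu hv
  exact ⟨-m, by rw [dot_neg_right, hm]; push_cast; ring⟩

/-- The vectors `± e i` for `i ∈ I`. -/
def signedFrame {ι : Type*} (e : ι → Fin 8 → ℝ) (I : Finset ι) : Finset (Fin 8 → ℝ) :=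
  I.image e ∪ I.image fun i ↦ -e i

variable {ι : Type*} {e : ι → Fin 8 → ℝ} {I : Finset ι}

lemma mem_signedFrame : v ∈ signedFrame e I ↔ ∃ i ∈ I, v = e i ∨ v = -e i := by
  simp only [signedFrame, Finset.mem_union, Finset.mem_image, and_or_left, exists_or,
    @eq_comm _ v]

lemma smul_signedFrame (w : (Fin 8 → ℝ) ≃ₗ[ℝ] (Fin 8 → ℝ)) :
    w • signedFrame e I = signedFrame (fun i ↦ w • e i) I := by
  rw [signedFrame, Finset.smul_finset_union]
  simp only [signedFrame, Finset.smul_finset_def, Finset.image_image, Function.comp_def, smul_neg]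

lemma IsMaxClique.signedFrame_subset (hK : IsMaxClique {-2, 0} K) (he : ∀ i ∈ I, e i ∈ K) :
    signedFrame e I ⊆ K := by
  intro v hv
  obtain ⟨i, hi, rfl | rfl⟩ := mem_signedFrame.1 hv
  · exact he i hi
  · exact hK.neg_mem (he i hi)

lemma card_signedFrame (he : ∀ i, isRoot (e i)) (horth : ∀ i j, i ≠ j → dot (e i) (e j) = 0) :
    (signedFrame e I).card = 2 * I.card := by
  have hinj : Function.Injective e := fun i j hij ↦ by
    by_contra hne
    have := (he i).2.symm.trans ((congrArg _ hij).trans (horth i j hne))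
    norm_num at this
  have hdisj : Disjoint (I.image e) (I.image fun i ↦ -e i) := by
    simp only [Finset.disjoint_left, Finset.mem_image, not_exists, not_and, forall_exists_index,
      and_imp, forall_apply_eq_imp_iff₂]
    intro i _ j _ hij
    have hneg : dot (e i) (e j) = -2 := by rw [← hij, dot_neg_left, (he j).2]
    obtain rfl | hne := eq_or_ne i j
    · linarith [(he i).2]
    · linarith [horth i j hne]
  rw [signedFrame, Finset.card_union_of_disjoint hdisj, Finset.card_image_of_injective _ hinj,
    Finset.card_image_of_injective _ fun i j h ↦ hinj (neg_injective h), two_mul]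

lemma isClique_signedFrame (he : ∀ i, isRoot (e i))
    (horth : ∀ i j, i ≠ j → dot (e i) (e j) = 0) : IsClique {-2, 0} (signedFrame e I) := by
  constructor
  · intro v hv
    obtain ⟨i, _, rfl | rfl⟩ := mem_signedFrame.1 hv
    exacts [he i, (he i).neg]
  · intro u hu v hv huv
    obtain ⟨i, _, hu⟩ := mem_signedFrame.1 hu
    obtain ⟨j, _, hv⟩ := mem_signedFrame.1 hv
    obtain rfl | hne := eq_or_ne i j
    · left
      obtain rfl | rfl := hu <;> obtain rfl | rfl := hv <;>
        simp_all [dot_neg_left, dot_neg_right, (he i).2]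
    · right
      obtain rfl | rfl := hu <;> obtain rfl | rfl := hv <;>
        simp [dot_neg_left, dot_neg_right, horth i j hne]

lemma eq_zero_of_forall_dot_eq_zero {e : Fin 8 → Fin 8 → ℝ} (he : ∀ i, isRoot (e i))
    (horth : ∀ i j, i ≠ j → dot (e i) (e j) = 0) (hv : ∀ i, dot (e i) v = 0) : v = 0 := by
  let M : Matrix (Fin 8) (Fin 8) ℝ := Matrix.of e
  have hM : M * ((1 / 2 : ℝ) • M.transpose) = 1 := by
    ext i j
    rw [Matrix.mul_smul, Matrix.smul_apply, Matrix.mul_apply']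
    change (1 / 2 : ℝ) • dot (e i) (e j) = _
    obtain rfl | hne := eq_or_ne i j
    · simp [(he i).2]
    · simp [horth i j hne, hne]
  calc v = (((1 / 2 : ℝ) • M.transpose) * M).mulVec v := by
        rw [mul_eq_one_comm.1 hM, Matrix.one_mulVec]
    _ = ((1 / 2 : ℝ) • M.transpose).mulVec (M.mulVec v) := (Matrix.mulVec_mulVec ..).symm
    _ = 0 := by rw [show M.mulVec v = 0 from funext hv, Matrix.mulVec_zero]

theorem isMaxClique_signedFrame {e : Fin 8 → Fin 8 → ℝ} (he : ∀ i, isRoot (e i))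
    (horth : ∀ i j, i ≠ j → dot (e i) (e j) = 0) :
    IsMaxClique {-2, 0} (signedFrame e Finset.univ) := by
  refine ⟨isClique_signedFrame he horth, fun K hK hsub ↦ hsub.antisymm' fun v hv ↦ ?_⟩
  by_contra hvnot
  refine (hK.1 v hv).ne_zero (eq_zero_of_forall_dot_eq_zero he horth fun i ↦ ?_)
  have hi : e i ∈ signedFrame e Finset.univ := mem_signedFrame.2 ⟨i, Finset.mem_univ i, .inl rfl⟩
  have hvi : v ≠ e i := fun h ↦ hvnot (h ▸ hi)
  rw [dot_comm]
  refine (hK.2 v hv (e i) (hsub hi) hvi).resolve_left fun h ↦ hvnot (mem_signedFrame.2 ?_)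
  exact ⟨i, Finset.mem_univ i, .inr ((hK.1 v hv).eq_neg_of_dot_eq_neg_two (he i) h)⟩

end Frame


/-! ### Roots in doubled integer coordinates -/

section DoubledRoots

variable {u : Fin 8 → ℝ}

/-- Integer vectors `z` with `half z` a root. Working with `z = 2 u` makes the root system
a decidable subset of `ℤ^8`. -/
def IsDoubledRoot (z : Fin 8 → ℤ) : Prop :=
  z ⬝ᵥ z = 8 ∧ 4 ∣ ∑ i, z i ∧ ∀ i, Even (z i - z 0)

instance : DecidablePred IsDoubledRoot := fun _ ↦ inferInstanceAs (Decidable (_ ∧ _))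

/-- The vector with doubled coordinates `z`. -/
def half (z : Fin 8 → ℤ) : Fin 8 → ℝ := fun i ↦ z i / 2

lemma half_injective : Function.Injective half := fun z z' h ↦ by
  funext i
  have hi : (z i : ℝ) / 2 = z' i / 2 := congrFun h i
  exact_mod_cast (div_left_inj' two_ne_zero).1 hi

lemma dot_intCast_half (x z : Fin 8 → ℤ) : dot (fun i ↦ x i) (half z) = (x ⬝ᵥ z : ℤ) / 2 := by
  simp only [dot, half, dotProduct, Int.cast_sum, Int.cast_mul, Finset.sum_div, mul_div_assoc]

lemma dot_half_half (x z : Fin 8 → ℤ) : dot (half x) (half z) = (x ⬝ᵥ z : ℤ) / 4 := by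
  simp only [dot, half, dotProduct, Int.cast_sum, Int.cast_mul, Finset.sum_div]
  exact Finset.sum_congr rfl fun i _ ↦ by ring

lemma isRoot_iff_exists_half : isRoot u ↔ ∃ z, IsDoubledRoot z ∧ half z = u := by
  constructor
  · rintro ⟨hlat, hnorm⟩
    obtain ⟨k, n, hn, hu⟩ := inLambda_iff_exists_int.1 hlat
    obtain ⟨m, hm⟩ := even_iff_two_dvd.1 hn
    have hhalf : half (fun i ↦ 2 * n i + k) = u := by
      funext i
      rw [hu, half]
      push_cast
      ring
    refine ⟨_, ⟨?_, ⟨m + 2 * k, ?_⟩, fun i ↦ ⟨n i - n 0, by ring⟩⟩, hhalf⟩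
    · rw [← hhalf, dot_half_half, div_eq_iff four_ne_zero] at hnorm
      exact_mod_cast hnorm.trans (by norm_num : (2 * 4 : ℝ) = 8)
    · simp only [Finset.sum_add_distrib, ← Finset.mul_sum, hm, Finset.sum_const,
        Finset.card_univ, Fintype.card_fin, nsmul_eq_mul]
      push_cast
      ring
  · rintro ⟨z, ⟨hnorm, ⟨m, hm⟩, hpar⟩, rfl⟩
    refine ⟨?_, by rw [dot_half_half, hnorm]; norm_num⟩
    choose n hn using hpar
    refine inLambda_iff_exists_int.2 ⟨z 0, n, ?_, fun i ↦ ?_⟩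
    · have hz : ∑ i, z i = ∑ i, (2 * n i + z 0) :=
        Finset.sum_congr rfl fun i _ ↦ by linarith [hn i]
      simp only [hz, Finset.sum_add_distrib, ← Finset.mul_sum, Finset.sum_const,
        Finset.card_univ, Fintype.card_fin, nsmul_eq_mul] at hm
      exact even_iff_two_dvd.2 (by push_cast at hm; omega)
    · have hz : (z i : ℝ) - z 0 = n i + n i := by exact_mod_cast hn i
      rw [half]
      linarith

lemma IsDoubledRoot.mem_piFinset {z : Fin 8 → ℤ} (hz : IsDoubledRoot z) :
    (∃ s ∈ Finset.univ.powersetCard 2, z ∈ Fintype.piFinset fun i ↦ if i ∈ s then {-2, 2} else {0})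
      ∨ z ∈ Fintype.piFinset fun _ ↦ {-1, 1} := by
  obtain ⟨hnorm, -, hpar⟩ := hz
  simp only [Fintype.mem_piFinset]
  obtain h0 | h0 := Int.even_or_odd (z 0)
  · left
    have hmem i : z i ∈ (if z i ≠ 0 then {-2, 2} else {0} : Finset ℤ) := by
      have hle : z i * z i ≤ 8 := hnorm ▸ Finset.single_le_sum (f := fun j ↦ z j * z j)
        (fun j _ ↦ mul_self_nonneg _) (Finset.mem_univ i)
      have : -2 ≤ z i := by nlinarith
      have : z i ≤ 2 := by nlinarith
      obtain ⟨n, hn⟩ : Even (z i) := by simpa using (hpar i).add h0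
      split_ifs <;> simp only [Finset.mem_insert, Finset.mem_singleton] <;> omega
    have hsq i : z i * z i = if z i ≠ 0 then 4 else 0 := by
      have := hmem i
      split_ifs at this ⊢ <;> simp only [Finset.mem_insert, Finset.mem_singleton] at this
      · obtain h | h := this <;> rw [h] <;> norm_num
      · rw [this, mul_zero]
    refine ⟨Finset.univ.filter (z · ≠ 0), ?_, by simpa using hmem⟩
    simp only [dotProduct, hsq, ← Finset.sum_filter, Finset.sum_const, nsmul_eq_mul] at hnorm
    rw [Finset.mem_powersetCard_univ]
    omega
  · right
    have hodd i : Odd (z i) := by simpa using (hpar i).add_odd h0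
    have hone : ∀ i ∈ Finset.univ, 1 ≤ z i * z i := fun i _ ↦
      Int.add_one_le_iff.2 (mul_self_pos.2 fun h ↦ by simpa [h] using hodd i)
    have hsum : ∑ _i : Fin 8, (1 : ℤ) = ∑ i, z i * z i := by simpa [dotProduct] using hnorm.symm
    intro i
    have := (Finset.sum_eq_sum_iff_of_le hone).1 hsum i (Finset.mem_univ i)
    simpa [or_comm] using mul_self_eq_one_iff.1 this.symm

end DoubledRoots

/-! ### The flag of the standard frame -/

section Flag

variable {u : Fin 8 → ℝ}

/-- The matrix whose rows are the standard frame. -/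
def stdFrameMatrix : Matrix (Fin 8) (Fin 8) ℤ :=
  !![1,  1, 0,  0, 0,  0, 0,  0;
     1, -1, 0,  0, 0,  0, 0,  0;
     0,  0, 1,  1, 0,  0, 0,  0;
     0,  0, 1, -1, 0,  0, 0,  0;
     0,  0, 0,  0, 1,  1, 0,  0;
     0,  0, 0,  0, 1, -1, 0,  0;
     0,  0, 0,  0, 0,  0, 1,  1;
     0,  0, 0,  0, 0,  0, 1, -1]

/-- The frame of orthogonal roots `e₀ ± e₁, e₂ ± e₃, e₄ ± e₅, e₆ ± e₇`, in this order. -/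
def stdFrame (i : Fin 8) : Fin 8 → ℝ := fun j ↦ stdFrameMatrix i j

/-- The maximal clique spanned by the standard frame. -/
def stdClique : Finset (Fin 8 → ℝ) := signedFrame stdFrame Finset.univ

lemma dot_stdFrame_stdFrame (i j : Fin 8) :
    dot (stdFrame i) (stdFrame j) = (stdFrameMatrix i ⬝ᵥ stdFrameMatrix j : ℤ) := by
  simp only [dot, stdFrame, dotProduct, Int.cast_sum, Int.cast_mul]

lemma isRoot_stdFrame (i : Fin 8) : isRoot (stdFrame i) := by
  refine ⟨inLambda_iff_exists_int.2
    ⟨0, stdFrameMatrix i, by revert i; decide, by simp [stdFrame]⟩, ?_⟩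
  rw [dot_stdFrame_stdFrame, show stdFrameMatrix i ⬝ᵥ stdFrameMatrix i = 2 by revert i; decide]
  norm_num

lemma dot_stdFrame_of_ne (i j : Fin 8) (hij : i ≠ j) : dot (stdFrame i) (stdFrame j) = 0 := by
  rw [dot_stdFrame_stdFrame, show stdFrameMatrix i ⬝ᵥ stdFrameMatrix j = 0 by
    revert i j; decide, Int.cast_zero]

lemma dot_stdFrame_eq (v : Fin 8 → ℝ) (i : Fin 8) :
    dot v (stdFrame i) = ![v 0 + v 1, v 0 - v 1, v 2 + v 3, v 2 - v 3,
      v 4 + v 5, v 4 - v 5, v 6 + v 7, v 6 - v 7] i := by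
  fin_cases i <;> simp [dot, stdFrame, stdFrameMatrix, Fin.sum_univ_eight, sub_eq_add_neg]

lemma isMaxClique_stdClique : IsMaxClique {-2, 0} stdClique :=
  isMaxClique_signedFrame isRoot_stdFrame dot_stdFrame_of_ne

lemma dot_stdFrame_half_eq_zero_iff (i : Fin 8) (z : Fin 8 → ℤ) :
    dot (stdFrame i) (half z) = 0 ↔ stdFrameMatrix i ⬝ᵥ z = 0 := by
  unfold stdFrame
  rw [dot_intCast_half, div_eq_zero_iff, or_iff_left two_ne_zero, Int.cast_eq_zero]

/-- The doubled roots `z` with `z i ∈ c i` for all `i` that are orthogonal to the first `k` vectors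
of the standard frame. -/
def doubledPerpRoots (c : Fin 8 → Finset ℤ) (k : ℕ) : Finset (Fin 8 → ℤ) :=
  {z ∈ Fintype.piFinset c |
    IsDoubledRoot z ∧ ∀ i : Fin 8, (i : ℕ) < k → stdFrameMatrix i ⬝ᵥ z = 0}

/-- The roots orthogonal to the first `k` vectors of the standard frame. -/
def perpRoots (k : ℕ) : Finset (Fin 8 → ℝ) :=
  ((Finset.univ.powersetCard 2).biUnion
      (fun s ↦ doubledPerpRoots (fun i ↦ if i ∈ s then {-2, 2} else {0}) k) ∪
    doubledPerpRoots (fun _ ↦ {-1, 1}) k).image half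

lemma mem_perpRoots {k : ℕ} :
    u ∈ perpRoots k ↔ isRoot u ∧ ∀ i : Fin 8, (i : ℕ) < k → dot (stdFrame i) u = 0 := by
  simp only [perpRoots, doubledPerpRoots, Finset.mem_image, Finset.mem_union, Finset.mem_biUnion,
    Finset.mem_filter, isRoot_iff_exists_half]
  constructor
  · rintro ⟨z, ⟨-, -, -, hz, hk⟩ | ⟨-, hz, hk⟩, rfl⟩ <;>
      exact ⟨⟨z, hz, rfl⟩, fun i hi ↦ (dot_stdFrame_half_eq_zero_iff i z).2 (hk i hi)⟩
  · rintro ⟨⟨z, hz, rfl⟩, hk⟩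
    have hk i hi := (dot_stdFrame_half_eq_zero_iff i z).1 (hk i hi)
    refine ⟨z, hz.mem_piFinset.imp ?_ (⟨·, hz, hk⟩), rfl⟩
    exact fun ⟨s, hs, hzs⟩ ↦ ⟨s, hs, hzs, hz, hk⟩

lemma card_perpRoots (k : ℕ) : (perpRoots k).card =
    ∑ s ∈ Finset.univ.powersetCard 2,
      (doubledPerpRoots (fun i ↦ if i ∈ s then {-2, 2} else {0}) k).card +
    (doubledPerpRoots (fun _ ↦ {-1, 1}) k).card := by
  have hsupp {s : Finset (Fin 8)} {z : Fin 8 → ℤ}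
      (hz : z ∈ Fintype.piFinset fun i ↦ if i ∈ s then {-2, 2} else {0}) (i : Fin 8) :
      i ∈ s ∧ (z i = -2 ∨ z i = 2) ∨ i ∉ s ∧ z i = 0 := by
    have := Fintype.mem_piFinset.1 hz i
    split_ifs at this with hi <;> simp_all
  rw [perpRoots, Finset.card_image_of_injective _ half_injective, Finset.card_union_of_disjoint,
    Finset.card_biUnion]
  · refine fun s _ t _ hst ↦ Finset.disjoint_filter_filter (Finset.disjoint_left.2 fun z hs ht ↦ ?_)
    refine hst (Finset.ext fun i ↦ ?_)
    have := hsupp hs i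
    have := hsupp ht i
    grind
  · refine (Finset.disjoint_biUnion_left ..).2 fun s _ ↦
      Finset.disjoint_filter_filter (Finset.disjoint_left.2 fun z hs hz ↦ ?_)
    have := hsupp hs 0
    have := Fintype.mem_piFinset.1 hz 0
    grind

lemma card_perpRoots_zero : (perpRoots 0).card = 240 := by
  rw [card_perpRoots]
  decide +kernel

lemma card_perpRoots_one : (perpRoots 1).card = 126 := by
  rw [card_perpRoots]
  decide +kernel

lemma card_perpRoots_two : (perpRoots 2).card = 60 := by
  rw [card_perpRoots]
  decide +kernel

lemma card_perpRoots_four : (perpRoots 4).card = 24 := by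
  rw [card_perpRoots]
  decide +kernel

end Flag

/-! ### Homogeneity of the flag -/

section Homogeneity

variable {a b : Fin 8 → ℝ} {k : Fin 8} {w : (Fin 8 → ℝ) ≃ₗ[ℝ] (Fin 8 → ℝ)}

/-- The elements of the Weyl group that fix the first `k` vectors of the standard frame. -/
def flagFixer (k : ℕ) : Subgroup ((Fin 8 → ℝ) ≃ₗ[ℝ] (Fin 8 → ℝ)) :=
  weylGroup ⊓ fixingSubgroup _ (stdFrame '' {i | (i : ℕ) < k})

lemma mem_flagFixer {k : ℕ} : w ∈ flagFixer k ↔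
    w ∈ weylGroup ∧ ∀ i : Fin 8, (i : ℕ) < k → w • stdFrame i = stdFrame i := by
  rw [flagFixer, Subgroup.mem_inf, mem_fixingSubgroup_iff, Set.forall_mem_image]
  rfl

lemma stdFrame_mem_perpRoots (k : Fin 8) : stdFrame k ∈ perpRoots k :=
  mem_perpRoots.2 ⟨isRoot_stdFrame k, fun _ hi ↦ dot_stdFrame_of_ne _ _ (Fin.ne_of_lt hi)⟩

lemma exists_flagFixer_smul_eq {k : ℕ} (ha : a ∈ perpRoots k) (hb : b ∈ perpRoots k)
    (hab : dot a b ≠ 0) : ∃ w ∈ flagFixer k, w • a = b := by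
  rw [mem_perpRoots] at ha hb
  obtain ⟨w, hw, hwa, hfix⟩ := exists_weyl_smul_eq_of_dot_ne_zero ha.1 hb.1 hab
  refine ⟨w, mem_flagFixer.2 ⟨hw, fun i hi ↦ hfix _ ?_ ?_⟩, hwa⟩
  · rw [dot_comm, ha.2 i hi]
  · rw [dot_comm, hb.2 i hi]

/-- The stabilizer of the first `k` vectors of the standard frame moves every root orthogonal to
them to the next vector of the frame. -/
def IsHomogeneousAt (k : Fin 8) : Prop :=
  ∀ u ∈ perpRoots k, ∃ w ∈ flagFixer k, w • u = stdFrame k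

/-- No root is orthogonal to a spanning set, so each `u` has a neighbour `half z` with `z ∈ G`, and
all of these are neighbours of `stdFrame k`. -/
lemma isHomogeneousAt_of_span (G : List (Fin 8 → ℤ))
    (hG : ∀ z ∈ G, IsDoubledRoot z ∧ stdFrameMatrix k ⬝ᵥ z ≠ 0 ∧
      ∀ i : Fin 8, (i : ℕ) < k → stdFrameMatrix i ⬝ᵥ z = 0)
    (hspan : ∀ x : Fin 8 → ℤ, (∀ z ∈ G, z ⬝ᵥ x = 0) →
      (∀ i : Fin 8, (i : ℕ) < k → stdFrameMatrix i ⬝ᵥ x = 0) → ∀ j, x j = 0) :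
    IsHomogeneousAt k := by
  intro u hu
  obtain ⟨hroot, hperp⟩ := mem_perpRoots.1 hu
  obtain ⟨x, hx, rfl⟩ := isRoot_iff_exists_half.1 hroot
  obtain ⟨z, hzG, hzx⟩ : ∃ z ∈ G, z ⬝ᵥ x ≠ 0 := by
    by_contra! h
    have hx0 : x = 0 :=
      funext (hspan x h fun i hi ↦ (dot_stdFrame_half_eq_zero_iff i x).1 (hperp i hi))
    simpa [hx0] using hx.1
  obtain ⟨hz, hzk, hzperp⟩ := hG z hzG
  have hzmem : half z ∈ perpRoots k :=
    mem_perpRoots.2 ⟨isRoot_iff_exists_half.2 ⟨z, hz, rfl⟩, fun i hi ↦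
      (dot_stdFrame_half_eq_zero_iff i z).2 (hzperp i hi)⟩
  obtain ⟨w, hw, hwx⟩ := exists_flagFixer_smul_eq hu hzmem (by
    rw [dot_half_half, dotProduct_comm]
    exact div_ne_zero (Int.cast_ne_zero.2 hzx) four_ne_zero)
  obtain ⟨w', hw', hwz⟩ := exists_flagFixer_smul_eq hzmem (stdFrame_mem_perpRoots k)
    (by rwa [dot_comm, Ne, dot_stdFrame_half_eq_zero_iff])
  exact ⟨w' * w, mul_mem hw' hw, by rw [mul_smul, hwx, hwz]⟩

lemma isHomogeneousAt_zero : IsHomogeneousAt 0 := by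
  refine isHomogeneousAt_of_span
    [![2, 0, 2, 0, 0, 0, 0, 0], ![2, 0, -2, 0, 0, 0, 0, 0], ![0, 2, 2, 0, 0, 0, 0, 0],
     ![2, 0, 0, 2, 0, 0, 0, 0], ![2, 0, 0, 0, 2, 0, 0, 0], ![2, 0, 0, 0, 0, 2, 0, 0],
     ![2, 0, 0, 0, 0, 0, 2, 0], ![2, 0, 0, 0, 0, 0, 0, 2]] (by decide) fun x hG _ ↦ ?_
  simp only [List.forall_mem_cons, dotProduct, Fin.sum_univ_eight, Matrix.cons_val] at hG
  exact fun | 0 | 1 | 2 | 3 | 4 | 5 | 6 | 7 => by omega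

lemma isHomogeneousAt_one : IsHomogeneousAt 1 := by
  refine isHomogeneousAt_of_span
    [![1, -1, -1, 1, 1, 1, 1, 1], ![1, -1, 1, -1, 1, 1, 1, 1], ![1, -1, 1, 1, -1, 1, 1, 1],
     ![1, -1, 1, 1, 1, -1, 1, 1], ![1, -1, 1, 1, 1, 1, -1, 1], ![1, -1, 1, 1, 1, 1, 1, -1],
     ![1, -1, 1, 1, 1, -1, -1, -1]] (by decide) fun x hG hk ↦ ?_
  have h0 := hk 0 (by decide)
  simp only [List.forall_mem_cons, dotProduct, Fin.sum_univ_eight, stdFrameMatrix, Matrix.of_apply,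
    Matrix.cons_val] at hG h0
  exact fun | 0 | 1 | 2 | 3 | 4 | 5 | 6 | 7 => by omega

lemma isHomogeneousAt_two : IsHomogeneousAt 2 := by
  refine isHomogeneousAt_of_span
    [![0, 0, 2, 0, 2, 0, 0, 0], ![0, 0, 2, 0, -2, 0, 0, 0], ![0, 0, 0, 2, 2, 0, 0, 0],
     ![0, 0, 2, 0, 0, 2, 0, 0], ![0, 0, 2, 0, 0, 0, 2, 0], ![0, 0, 2, 0, 0, 0, 0, 2]]
    (by decide) fun x hG hk ↦ ?_
  have h0 := hk 0 (by decide)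
  have h1 := hk 1 (by decide)
  simp only [List.forall_mem_cons, dotProduct, Fin.sum_univ_eight, stdFrameMatrix, Matrix.of_apply,
    Matrix.cons_val] at hG h0 h1
  exact fun | 0 | 1 | 2 | 3 | 4 | 5 | 6 | 7 => by omega

lemma isHomogeneousAt_four : IsHomogeneousAt 4 := by
  refine isHomogeneousAt_of_span
    [![0, 0, 0, 0, 2, 0, 2, 0], ![0, 0, 0, 0, 2, 0, -2, 0], ![0, 0, 0, 0, 0, 2, 2, 0],
     ![0, 0, 0, 0, 2, 0, 0, 2]] (by decide) fun x hG hk ↦ ?_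
  have h0 := hk 0 (by decide)
  have h1 := hk 1 (by decide)
  have h2 := hk 2 (by decide)
  have h3 := hk 3 (by decide)
  simp only [List.forall_mem_cons, dotProduct, Fin.sum_univ_eight, stdFrameMatrix, Matrix.of_apply,
    Matrix.cons_val] at hG h0 h1 h2 h3
  exact fun | 0 | 1 | 2 | 3 | 4 | 5 | 6 | 7 => by omega

end Homogeneity

/-! ### Maximal cliques through a partial frame -/

section Counting

variable {v : Fin 8 → ℝ} {k : ℕ} {K : Finset (Fin 8 → ℝ)}
  {w : (Fin 8 → ℝ) ≃ₗ[ℝ] (Fin 8 → ℝ)}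

open Classical in
/-- The maximal cliques in `Γ_{-2,0}` that contain the first `k` vectors of the standard frame. -/
def cliquesThrough (k : ℕ) : Finset (Finset (Fin 8 → ℝ)) :=
  {K ∈ (perpRoots 0).powerset |
    IsMaxClique {-2, 0} K ∧ ∀ i : Fin 8, (i : ℕ) < k → stdFrame i ∈ K}

lemma mem_cliquesThrough : K ∈ cliquesThrough k ↔
    IsMaxClique {-2, 0} K ∧ ∀ i : Fin 8, (i : ℕ) < k → stdFrame i ∈ K := by
  simp only [cliquesThrough, Finset.mem_filter, Finset.mem_powerset, and_iff_right_iff_imp]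
  exact fun hK u hu ↦ mem_perpRoots.2 ⟨hK.1.1.1 u hu, fun i hi ↦ absurd hi (Nat.not_lt_zero i)⟩

lemma mem_cliquesThrough_zero : K ∈ cliquesThrough 0 ↔ IsMaxClique {-2, 0} K := by
  simp only [mem_cliquesThrough, Nat.not_lt_zero, false_implies, implies_true, and_true]

lemma mem_cliquesThrough_succ (k : Fin 8) :
    K ∈ cliquesThrough (k + 1) ↔ K ∈ cliquesThrough k ∧ stdFrame k ∈ K := by
  simp only [mem_cliquesThrough, and_assoc, Nat.lt_succ_iff_lt_or_eq, Fin.val_inj, or_imp,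
    forall_and, forall_eq]

lemma smul_mem_cliquesThrough_iff (hw : w ∈ flagFixer k) :
    w • K ∈ cliquesThrough k ↔ K ∈ cliquesThrough k := by
  obtain ⟨hwW, hfix⟩ := mem_flagFixer.1 hw
  rw [mem_cliquesThrough, mem_cliquesThrough, isMaxClique_smul_iff hwW]
  refine and_congr_right fun _ ↦ forall₂_congr fun i hi ↦ ?_
  nth_rw 1 [← hfix i hi]
  exact Finset.smul_mem_smul_finset_iff w

lemma mem_perpRoots_iff_notMem_signedFrame (hK : K ∈ cliquesThrough k) (hv : v ∈ K) :
    v ∈ perpRoots k ↔ v ∉ signedFrame stdFrame {i : Fin 8 | (i : ℕ) < k} := by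
  obtain ⟨hmax, hflag⟩ := mem_cliquesThrough.1 hK
  have hroot := hmax.1.1 v hv
  simp only [mem_perpRoots, hroot, true_and, mem_signedFrame, Finset.mem_filter_univ, not_exists,
    not_and, not_or]
  refine forall₂_congr fun i hi ↦ ⟨fun h ↦ ⟨?_, ?_⟩, fun ⟨hne, hneg⟩ ↦ ?_⟩
  · rintro rfl
    norm_num [(isRoot_stdFrame i).2] at h
  · rintro rfl
    norm_num [dot_neg_right, (isRoot_stdFrame i).2] at h
  · rw [dot_comm]
    exact (hmax.1.2 v hv _ (hflag i hi) hne).resolve_left fun h ↦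
      hneg (hroot.eq_neg_of_dot_eq_neg_two (isRoot_stdFrame i) h)

lemma exists_mem_perpRoots_of_mem_cliquesThrough {k : Fin 8} (hK : K ∈ cliquesThrough k) :
    ∃ u ∈ K, u ∈ perpRoots k := by
  by_contra! h
  have hmax := (mem_cliquesThrough.1 hK).1
  refine h (stdFrame k) (hmax.mem_of_forall_even_dot (isRoot_stdFrame k) fun v hv ↦ ⟨0, ?_⟩)
    (stdFrame_mem_perpRoots k)
  have hvframe := not_not.1 ((mem_perpRoots_iff_notMem_signedFrame hK hv).not.1 (h v hv))
  obtain ⟨i, hi, hvi⟩ := mem_signedFrame.1 hvframe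
  have horth : dot (stdFrame i) (stdFrame k) = 0 :=
    dot_stdFrame_of_ne i k (Fin.ne_of_lt (Finset.mem_filter_univ i |>.1 hi))
  obtain rfl | rfl := hvi <;> simp only [dot_neg_left, horth, Int.cast_zero, mul_zero, neg_zero]

lemma exists_weyl_smul_mem_cliquesThrough_succ {k : Fin 8} (hk : IsHomogeneousAt k)
    (hK : K ∈ cliquesThrough k) : ∃ w ∈ weylGroup, w • K ∈ cliquesThrough (k + 1) := by
  obtain ⟨u, huK, hu⟩ := exists_mem_perpRoots_of_mem_cliquesThrough hK
  obtain ⟨w, hw, hwu⟩ := hk u hu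
  refine ⟨w, (mem_flagFixer.1 hw).1, (mem_cliquesThrough_succ k).2 ⟨?_, ?_⟩⟩
  · exact (smul_mem_cliquesThrough_iff hw).2 hK
  · exact hwu ▸ Finset.smul_mem_smul_finset huK

lemma card_filter_mem_perpRoots (hK : K ∈ cliquesThrough k) :
    {u ∈ perpRoots k | u ∈ K}.card = K.card - 2 * min 8 k := by
  obtain ⟨hmax, hflag⟩ := mem_cliquesThrough.1 hK
  have hsub : signedFrame stdFrame {i : Fin 8 | (i : ℕ) < k} ⊆ K :=
    hmax.signedFrame_subset fun i hi ↦ hflag i (by simpa using hi)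
  have heq : {u ∈ perpRoots k | u ∈ K} =
      K \ signedFrame stdFrame {i : Fin 8 | (i : ℕ) < k} := by
    ext u
    rw [Finset.mem_filter, Finset.mem_sdiff, and_comm]
    exact and_congr_right fun hu ↦ mem_perpRoots_iff_notMem_signedFrame hK hu
  rw [heq, Finset.card_sdiff_of_subset hsub, card_signedFrame isRoot_stdFrame dot_stdFrame_of_ne,
    Fin.card_filter_val_lt]

/-- The products of `v` with `e₀ ± e₁` are even, so `v 0`, half their sum, is an integer. -/
lemma exists_int_eq_of_mem_cliquesThrough_two (hK : K ∈ cliquesThrough 2) (hv : v ∈ K) (i : Fin 8) :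
    ∃ m : ℤ, v i = m := by
  obtain ⟨hmax, hflag⟩ := mem_cliquesThrough.1 hK
  obtain ⟨m, hm⟩ := hmax.1.exists_int_dot_eq_two_mul hv (hflag 0 (by decide))
  obtain ⟨m', hm'⟩ := hmax.1.exists_int_dot_eq_two_mul hv (hflag 1 (by decide))
  simp only [dot_stdFrame_eq, Matrix.cons_val] at hm hm'
  obtain ⟨k, n, -, hn⟩ := inLambda_iff_exists_int.1 (hmax.1.1 v hv).1
  refine ⟨m + m' + n i - n 0, ?_⟩
  push_cast
  linarith [hn 0, hn i]

lemma stdFrame_mem_of_dot_eq_sub {i j l : Fin 8} (hK : K ∈ cliquesThrough 2) (hi : stdFrame i ∈ K)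
    (hij : ∀ v, dot v (stdFrame j) = dot v (stdFrame i) - 2 * v l) : stdFrame j ∈ K := by
  have hmax := (mem_cliquesThrough.1 hK).1
  refine hmax.mem_of_forall_even_dot (isRoot_stdFrame j) fun v hv ↦ ?_
  obtain ⟨m, hm⟩ := hmax.1.exists_int_dot_eq_two_mul hv hi
  obtain ⟨n, hn⟩ := exists_int_eq_of_mem_cliquesThrough_two hK hv l
  refine ⟨m - n, ?_⟩
  rw [hij, hm, hn]
  push_cast
  ring

lemma cliquesThrough_antitone : Antitone cliquesThrough := fun _ _ hkl _ hK ↦ by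
  obtain ⟨hmax, hflag⟩ := mem_cliquesThrough.1 hK
  exact mem_cliquesThrough.2 ⟨hmax, fun i hi ↦ hflag i (hi.trans_le hkl)⟩

lemma cliquesThrough_four : cliquesThrough 4 = cliquesThrough 3 := by
  refine (cliquesThrough_antitone (by decide)).antisymm fun K hK ↦ ?_
  refine (mem_cliquesThrough_succ 3).2 ⟨hK, stdFrame_mem_of_dot_eq_sub (i := 2) (l := 3)
    (cliquesThrough_antitone (by decide) hK) ((mem_cliquesThrough.1 hK).2 2 (by decide)) fun v ↦ ?_⟩
  simp only [dot_stdFrame_eq, Matrix.cons_val]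
  ring

lemma stdFrame_mem_of_mem_cliquesThrough_five (hK : K ∈ cliquesThrough 5) (i : Fin 8) :
    stdFrame i ∈ K := by
  obtain ⟨hmax, hflag⟩ := mem_cliquesThrough.1 hK
  have hK2 : K ∈ cliquesThrough 2 := cliquesThrough_antitone (by decide) hK
  have h5 : stdFrame 5 ∈ K := by
    refine stdFrame_mem_of_dot_eq_sub (l := 5) hK2 (hflag 4 (by decide)) fun v ↦ ?_
    simp only [dot_stdFrame_eq, Matrix.cons_val]
    ring
  have h6 : stdFrame 6 ∈ K := by
    refine hmax.mem_of_forall_even_dot (isRoot_stdFrame 6) fun v hv ↦ ?_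
    obtain ⟨m, hm⟩ := (hmax.1.1 v hv).1.2
    obtain ⟨m₀, hm₀⟩ := hmax.1.exists_int_dot_eq_two_mul hv (hflag 0 (by decide))
    obtain ⟨m₂, hm₂⟩ := hmax.1.exists_int_dot_eq_two_mul hv (hflag 2 (by decide))
    obtain ⟨m₄, hm₄⟩ := hmax.1.exists_int_dot_eq_two_mul hv (hflag 4 (by decide))
    refine ⟨m - m₀ - m₂ - m₄, ?_⟩
    rw [Fin.sum_univ_eight] at hm
    simp only [dot_stdFrame_eq, Matrix.cons_val] at hm₀ hm₂ hm₄ ⊢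
    push_cast
    linarith
  have h7 : stdFrame 7 ∈ K := by
    refine stdFrame_mem_of_dot_eq_sub (l := 7) hK2 h6 fun v ↦ ?_
    simp only [dot_stdFrame_eq, Matrix.cons_val]
    ring
  obtain hi | rfl | rfl | rfl : (i : ℕ) < 5 ∨ i = 5 ∨ i = 6 ∨ i = 7 := by omega
  exacts [hflag i hi, h5, h6, h7]

lemma cliquesThrough_five : cliquesThrough 5 = {stdClique} := by
  ext K
  rw [Finset.mem_singleton]
  constructor
  · intro hK
    have hmax := (mem_cliquesThrough.1 hK).1
    exact isMaxClique_stdClique.2 K hmax.1 <|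
      hmax.signedFrame_subset fun i _ ↦ stdFrame_mem_of_mem_cliquesThrough_five hK i
  · rintro rfl
    exact mem_cliquesThrough.2
      ⟨isMaxClique_stdClique, fun i _ ↦ mem_signedFrame.2 ⟨i, Finset.mem_univ i, .inl rfl⟩⟩

theorem exists_weyl_smul_eq_stdClique (hK : IsMaxClique {-2, 0} K) :
    ∃ w ∈ weylGroup, w • K = stdClique := by
  obtain ⟨w₀, hw₀, h⟩ := exists_weyl_smul_mem_cliquesThrough_succ isHomogeneousAt_zero
    (mem_cliquesThrough_zero.2 hK)
  obtain ⟨w₁, hw₁, h⟩ := exists_weyl_smul_mem_cliquesThrough_succ isHomogeneousAt_one h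
  obtain ⟨w₂, hw₂, h⟩ := exists_weyl_smul_mem_cliquesThrough_succ isHomogeneousAt_two h
  obtain ⟨w₄, hw₄, h⟩ := exists_weyl_smul_mem_cliquesThrough_succ isHomogeneousAt_four
    (cliquesThrough_four.symm.subset h)
  refine ⟨w₄ * w₂ * w₁ * w₀, mul_mem (mul_mem (mul_mem hw₄ hw₂) hw₁) hw₀, ?_⟩
  simp only [mul_smul]
  exact Finset.mem_singleton.1 (cliquesThrough_five.subset h)

lemma IsMaxClique.card_eq (hK : IsMaxClique {-2, 0} K) : K.card = 16 := by
  obtain ⟨w, -, hwK⟩ := exists_weyl_smul_eq_stdClique hK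
  rw [← Finset.card_smul_finset w, hwK, stdClique,
    card_signedFrame isRoot_stdFrame dot_stdFrame_of_ne, Finset.card_fin]

/-- Double counting of the pairs `(K, u)` with `u ∈ K`: the cliques through `u` are moved to the
cliques through the next frame vector by an element of the stabilizer. -/
lemma card_cliquesThrough_mul {k : Fin 8} (hk : IsHomogeneousAt k) :
    (cliquesThrough k).card * (16 - 2 * k) =
      (perpRoots k).card * (cliquesThrough (k + 1)).card := by
  refine Finset.card_mul_eq_card_mul (fun K u ↦ u ∈ K) (fun K hK ↦ ?_) fun u hu ↦ ?_
  · rw [Finset.bipartiteAbove, card_filter_mem_perpRoots hK,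
      (mem_cliquesThrough.1 hK).1.card_eq, min_eq_right k.is_lt.le]
  · obtain ⟨w, hw, hwu⟩ := hk u hu
    refine Finset.card_equiv (MulAction.toPerm w) fun K ↦ ?_
    rw [MulAction.toPerm_apply, mem_cliquesThrough_succ, Finset.mem_bipartiteBelow,
      smul_mem_cliquesThrough_iff hw, ← hwu, Finset.smul_mem_smul_finset_iff]

theorem card_cliquesThrough_zero : (cliquesThrough 0).card = 2025 := by
  have h0 : (cliquesThrough 0).card * 16 = 240 * (cliquesThrough 1).card := by
    simpa [card_perpRoots_zero] using card_cliquesThrough_mul isHomogeneousAt_zero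
  have h1 : (cliquesThrough 1).card * 14 = 126 * (cliquesThrough 2).card := by
    simpa [card_perpRoots_one] using card_cliquesThrough_mul isHomogeneousAt_one
  have h2 : (cliquesThrough 2).card * 12 = 60 * (cliquesThrough 3).card := by
    simpa [card_perpRoots_two] using card_cliquesThrough_mul isHomogeneousAt_two
  have h4 : (cliquesThrough 4).card * 8 = 24 * (cliquesThrough 5).card := by
    simpa [card_perpRoots_four] using card_cliquesThrough_mul isHomogeneousAt_four
  rw [cliquesThrough_four, cliquesThrough_five, Finset.card_singleton] at h4
  omega

end Counting

/-- Every maximal clique in `Γ_{-2,0}` has size 16 and consists of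
eight pairwise orthogonal roots together with their negatives; there are exactly
2025 maximal cliques in `Γ_{-2,0}`, and the Weyl group acts transitively on them. -/
theorem stmt_16 :
    (∀ K : Finset (Fin 8 → ℝ), IsMaxClique {-2, 0} K →
      K.card = 16 ∧
      ∃ e : Fin 8 → (Fin 8 → ℝ), (∀ i, isRoot (e i)) ∧
        (∀ i j, i ≠ j → dot (e i) (e j) = 0) ∧
        (K : Set (Fin 8 → ℝ)) = Set.range e ∪ Set.range (fun i => -(e i))) ∧
    ({K : Finset (Fin 8 → ℝ) | IsMaxClique {-2, 0} K}.ncard = 2025) ∧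
    (∀ K1 K2 : Finset (Fin 8 → ℝ), IsMaxClique {-2, 0} K1 → IsMaxClique {-2, 0} K2 →
      ∃ w : (Fin 8 → ℝ) ≃ₗ[ℝ] (Fin 8 → ℝ), IsWeyl w ∧
        ⇑w '' (K1 : Set (Fin 8 → ℝ)) = (K2 : Set (Fin 8 → ℝ))) := by
  refine ⟨fun K hK ↦ ⟨hK.card_eq, ?_⟩, ?_, fun K₁ K₂ hK₁ hK₂ ↦ ?_⟩
  · obtain ⟨w, hw, hwK⟩ := exists_weyl_smul_eq_stdClique hK
    have hw' := inv_mem hw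
    refine ⟨fun i ↦ w⁻¹ • stdFrame i, fun i ↦ (isRoot_stdFrame i).smul hw',
      fun i j hij ↦ (dot_smul_smul hw' _ _).trans (dot_stdFrame_of_ne i j hij), ?_⟩
    rw [eq_inv_smul_iff.2 hwK, stdClique, smul_signedFrame]
    simp only [signedFrame, Finset.coe_union, Finset.coe_image, Finset.coe_univ, Set.image_univ]
  · rw [← card_cliquesThrough_zero, ← Set.ncard_coe_finset]
    exact congrArg _ (Set.ext fun K ↦ mem_cliquesThrough_zero.symm)
  · obtain ⟨w₁, hw₁, h₁⟩ := exists_weyl_smul_eq_stdClique hK₁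
    obtain ⟨w₂, hw₂, h₂⟩ := exists_weyl_smul_eq_stdClique hK₂
    have hK : (w₂⁻¹ * w₁) • K₁ = K₂ := by rw [mul_smul, h₁, ← h₂, inv_smul_smul]
    refine ⟨w₂⁻¹ * w₁, mul_mem (inv_mem hw₂) hw₁, ?_⟩
    rw [← hK, Finset.coe_smul_finset]
    rfl
end
end

section
/- Every clique in Γ_{-1,0} (i.e. every set of roots whose pairwise dot products lie in {-1,0}) of size greater than 10 contains four roots that are pairwise orthogonal. -/
noncomputable section

/-!
Vectors of squared norm at most `m` with pairwise inner products in `{0} ∪ (-∞, -1]` are pairwise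
obtuse. In a linear relation between pairwise obtuse vectors the positive and the negative
coefficients can be separated, because the two resulting sums have a nonpositive inner product. A
minimal dependent subset `t` therefore carries a relation with positive coefficients, which forces
every remaining vector to be orthogonal to all of `t`. Since `t` has only one element more than its
rank, peeling off such subsets splits a set of more than `rank + k` vectors into `k + 1` mutually
orthogonal classes. If there are also more than `(m + 1) * (k + 1)` vectors, then some class has at
least `m + 2` elements and hence contains an orthogonal pair: otherwise the squared norm of its sum
would be negative. Adding one vector from each other class gives `k + 2` pairwise orthogonal
vectors. Roots have `m = 2`, and more than ten of them in rank at most eight allow `k = 2`.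
-/

section LinearIndependence

variable {ι 𝕜 V : Type*} [DivisionRing 𝕜] [AddCommGroup V] [Module 𝕜 V] {v : ι → V} {s : Finset ι}

theorem finrank_image_eq_card (hindep : LinearIndepOn 𝕜 v s) :
    (v '' s).finrank 𝕜 = s.card := by
  rw [Set.finrank, Set.image_eq_range]
  exact (finrank_span_eq_card hindep).trans (Fintype.card_coe s)

theorem card_le_finrank_add_one_of_minimal
    (hmin : Minimal (fun t : Finset ι => ¬ LinearIndepOn 𝕜 v t) s) :
    s.card ≤ (v '' s).finrank 𝕜 + 1 := by
  classical
  obtain rfl | ⟨i, hi⟩ := s.eq_empty_or_nonempty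
  · simp
  have hindep : LinearIndepOn 𝕜 v (s.erase i : Finset ι) := by
    by_contra hdep
    exact hmin.not_prop_of_lt (Finset.erase_ssubset hi) hdep
  have hrank : (s.erase i).card ≤ (v '' s).finrank 𝕜 := by
    rw [← finrank_image_eq_card hindep]
    have := FiniteDimensional.span_of_finite 𝕜 (s.finite_toSet.image v)
    exact Submodule.finrank_mono (Submodule.span_mono (Set.image_mono (by simp)))
  have := Finset.card_erase_add_one hi
  lia

end LinearIndependence

theorem finrank_union_of_orthogonal {𝕜 V : Type*} [Field 𝕜] [AddCommGroup V] [Module 𝕜 V]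
    {B : LinearMap.BilinForm 𝕜 V} (hB : B.toQuadraticMap.Anisotropic) {X Y : Set V}
    (hX : X.Finite) (hY : Y.Finite) (hXY : ∀ x ∈ X, ∀ y ∈ Y, B x y = 0) :
    (X ∪ Y).finrank 𝕜 = X.finrank 𝕜 + Y.finrank 𝕜 := by
  have hspan : ∀ x ∈ Submodule.span 𝕜 X, ∀ y ∈ Submodule.span 𝕜 Y, B x y = 0 := by
    intro x hx y hy
    induction hx, hy using Submodule.span_induction₂ <;> simp_all
  have hdisj : Submodule.span 𝕜 X ⊓ Submodule.span 𝕜 Y = ⊥ :=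
    (Submodule.eq_bot_iff _).mpr fun x hx => hB x (hspan x hx.1 x hx.2)
  have := FiniteDimensional.span_of_finite 𝕜 hX
  have := FiniteDimensional.span_of_finite 𝕜 hY
  have hsup := Submodule.finrank_sup_add_finrank_inf_eq (Submodule.span 𝕜 X) (Submodule.span 𝕜 Y)
  rwa [hdisj, finrank_bot, add_zero, ← Submodule.span_union] at hsup

theorem posDef_dotProductBilin (n R : Type*) [Fintype n] [CommRing R] [LinearOrder R]
    [IsStrictOrderedRing R] :
    (LinearMap.BilinMap.toQuadraticMap
      (dotProductBilin R R : LinearMap.BilinForm R (n → R))).PosDef :=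
  QuadraticMap.posDef_of_nonneg (fun x => Finset.sum_nonneg fun i _ => mul_self_nonneg (x i))
    fun _ => dotProduct_self_eq_zero.mp

section Splitting

variable {ι κ : Type*} {r : ι → ι → Prop} {s t : Finset ι}

/-- The map `c` splits `s` into nonempty classes `{i ∈ s | c i = a}`, one for each `a : κ`, such
that `r` relates any two elements of different classes. It is used with `r` the orthogonality of
vectors, to describe a decomposition of a set of vectors into mutually orthogonal parts. -/
structure IsSplitting (r : ι → ι → Prop) (s : Finset ι) (c : ι → κ) : Prop where
  exists_mem : ∀ a, ∃ i ∈ s, c i = a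
  rel : ∀ i ∈ s, ∀ j ∈ s, c i ≠ c j → r i j

theorem IsSplitting.cons [DecidableEq ι] {k : ℕ} {c : ι → Fin k} (hc : IsSplitting r (s \ t) c)
    (hts : t ⊆ s) (ht : t.Nonempty) (hr : ∀ i ∈ t, ∀ j ∈ s \ t, r i j ∧ r j i) :
    IsSplitting r s (fun i => if i ∈ t then (0 : Fin (k + 1)) else (c i).succ) where
  exists_mem := by
    refine Fin.cases ?_ fun a => ?_
    · obtain ⟨i, hi⟩ := ht
      exact ⟨i, hts hi, if_pos hi⟩
    · obtain ⟨i, hi, rfl⟩ := hc.exists_mem a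
      obtain ⟨his, hit⟩ := Finset.mem_sdiff.mp hi
      exact ⟨i, his, if_neg hit⟩
  rel i hi j hj hij := by
    by_cases hit : i ∈ t <;> by_cases hjt : j ∈ t
    · simp [hit, hjt] at hij
    · exact (hr i hit j (Finset.mem_sdiff.mpr ⟨hj, hjt⟩)).1
    · exact (hr j hjt i (Finset.mem_sdiff.mpr ⟨hi, hit⟩)).2
    · exact hc.rel i (Finset.mem_sdiff.mpr ⟨hi, hit⟩) j (Finset.mem_sdiff.mpr ⟨hj, hjt⟩)
        fun h => hij (by simp only [hit, hjt, h])

theorem IsSplitting.exists_section_apply_eq {c : ι → κ} (hc : IsSplitting r s c) {i : ι}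
    (hi : i ∈ s) : ∃ g : κ → ι, (∀ a, g a ∈ s) ∧ Function.RightInverse g c ∧ g (c i) = i := by
  classical
  choose g hgs hcg using hc.exists_mem
  refine ⟨Function.update g (c i) i, fun a => ?_, fun a => ?_, Function.update_self ..⟩
  · obtain rfl | ha := eq_or_ne a (c i)
    · simpa using hi
    · simpa [ha] using hgs a
  · obtain rfl | ha := eq_or_ne a (c i)
    · simp
    · simp [ha, hcg]

theorem IsSplitting.exists_subset_card_eq_pairwise [Fintype κ] {c : ι → κ}
    (hc : IsSplitting r s c) {i j : ι} (hi : i ∈ s) (hj : j ∈ s) (hne : i ≠ j)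
    (hcij : c i = c j) (hij : r i j) (hji : r j i) :
    ∃ t ⊆ s, t.card = Fintype.card κ + 1 ∧ (t : Set ι).Pairwise r := by
  classical
  -- With `i` representing its own class, `j` can join the representatives.
  obtain ⟨g, hgs, hcg, hgi⟩ := hc.exists_section_apply_eq hi
  rw [hcij] at hgi
  have hj_image : j ∉ Finset.univ.image g := by
    intro h
    obtain ⟨a, -, rfl⟩ := Finset.mem_image.mp h
    rw [hcg] at hgi
    exact hne hgi.symm
  have hr : ∀ a, r (g a) j ∧ r j (g a) := by
    intro a
    obtain rfl | ha := eq_or_ne a (c j)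
    · rw [hgi]; exact ⟨hij, hji⟩
    · rw [← hcg a] at ha
      exact ⟨hc.rel _ (hgs a) _ hj ha, hc.rel _ hj _ (hgs a) ha.symm⟩
  refine ⟨insert j (Finset.univ.image g), ?_, ?_, ?_⟩
  · simpa [Finset.insert_subset_iff, hj, Finset.image_subset_iff] using hgs
  · rw [Finset.card_insert_of_notMem hj_image,
      Finset.card_image_of_injective _ hcg.injective, Finset.card_univ]
  · rw [Finset.coe_insert, Finset.coe_image, Finset.coe_univ, Set.image_univ, Set.pairwise_insert]
    refine ⟨?_, Set.forall_mem_range.mpr fun a _ => (hr a).symm⟩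
    rintro _ ⟨a, rfl⟩ _ ⟨b, rfl⟩ hab
    refine hc.rel _ (hgs a) _ (hgs b) fun h => hab ?_
    rw [hcg, hcg] at h
    rw [h]

end Splitting

section ObtuseVectors

variable {ι 𝕜 V : Type*} [Field 𝕜] [LinearOrder 𝕜] [IsStrictOrderedRing 𝕜]
  [AddCommGroup V] [Module 𝕜 V] {B : LinearMap.BilinForm 𝕜 V} {v : ι → V} {s : Finset ι}

theorem sum_posPart_smul_eq_zero_of_pairwise_nonpos (hB : B.toQuadraticMap.PosDef)
    (hobtuse : (s : Set ι).Pairwise fun i j => B (v i) (v j) ≤ 0) {f : ι → 𝕜}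
    (hf : ∑ i ∈ s, f i • v i = 0) : ∑ i ∈ s, (f i)⁺ • v i = 0 := by
  have hpos_eq_neg : ∑ i ∈ s, (f i)⁺ • v i = ∑ i ∈ s, (f i)⁻ • v i := by
    rw [← sub_eq_zero, ← Finset.sum_sub_distrib, ← hf]
    simp only [← sub_smul, posPart_sub_negPart]
  refine hB.le_zero_iff.mp ?_
  calc B (∑ i ∈ s, (f i)⁺ • v i) (∑ i ∈ s, (f i)⁺ • v i)
      = B (∑ i ∈ s, (f i)⁺ • v i) (∑ j ∈ s, (f j)⁻ • v j) := by rw [← hpos_eq_neg]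
    _ = ∑ j ∈ s, ∑ i ∈ s, (f j)⁻ * ((f i)⁺ * B (v i) (v j)) := by
        simp only [LinearMap.BilinForm.sum_left, LinearMap.BilinForm.smul_left,
          LinearMap.BilinForm.sum_right, LinearMap.BilinForm.smul_right, Finset.mul_sum]
    _ ≤ 0 := Finset.sum_nonpos fun j hj => Finset.sum_nonpos fun i hi => ?_
  obtain rfl | hij := eq_or_ne i j
  · obtain h | h := le_total (f i) 0
    · simp [posPart_eq_zero.mpr h]
    · simp [negPart_eq_zero.mpr h]
  · exact mul_nonpos_of_nonneg_of_nonpos (negPart_nonneg _)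
      (mul_nonpos_of_nonneg_of_nonpos (posPart_nonneg _) (hobtuse hi hj hij))

theorem exists_nonneg_sum_smul_eq_zero_of_not_linearIndepOn (hB : B.toQuadraticMap.PosDef)
    (hobtuse : (s : Set ι).Pairwise fun i j => B (v i) (v j) ≤ 0)
    (hdep : ¬ LinearIndepOn 𝕜 v s) :
    ∃ f : ι → 𝕜, 0 ≤ f ∧ ∑ i ∈ s, f i • v i = 0 ∧ ∃ i ∈ s, 0 < f i := by
  obtain ⟨f, hf, i, hi, hfi⟩ := not_linearIndepOn_finset_iff.mp hdep
  obtain hneg | hpos := lt_or_gt_of_ne hfi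
  · have hf' : ∑ i ∈ s, (-f) i • v i = 0 := by simp [hf]
    exact ⟨fun i => ((-f) i)⁺, fun _ => posPart_nonneg _,
      sum_posPart_smul_eq_zero_of_pairwise_nonpos hB hobtuse hf',
      i, hi, posPart_pos (neg_pos.mpr hneg)⟩
  · exact ⟨fun i => (f i)⁺, fun _ => posPart_nonneg _,
      sum_posPart_smul_eq_zero_of_pairwise_nonpos hB hobtuse hf, i, hi, posPart_pos hpos⟩

theorem exists_pos_sum_smul_eq_zero_of_minimal (hB : B.toQuadraticMap.PosDef)
    (hobtuse : (s : Set ι).Pairwise fun i j => B (v i) (v j) ≤ 0)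
    (hmin : Minimal (fun t : Finset ι => ¬ LinearIndepOn 𝕜 v t) s) :
    ∃ f : ι → 𝕜, (∀ i ∈ s, 0 < f i) ∧ ∑ i ∈ s, f i • v i = 0 := by
  obtain ⟨f, hf_nonneg, hf, i, hi, hfi⟩ :=
    exists_nonneg_sum_smul_eq_zero_of_not_linearIndepOn hB hobtuse hmin.prop
  refine ⟨f, ?_, hf⟩
  have hsupport_dep : ¬ LinearIndepOn 𝕜 v ({i ∈ s | 0 < f i} : Finset ι) := by
    refine not_linearIndepOn_finset_iff.mpr
      ⟨f, ?_, i, Finset.mem_filter.mpr ⟨hi, hfi⟩, hfi.ne'⟩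
    rw [Finset.sum_filter_of_ne, hf]
    exact fun j _ hj => (hf_nonneg j).lt_of_ne' (left_ne_zero_of_smul hj)
  exact Finset.filter_eq_self.mp (hmin.eq_of_le hsupport_dep (Finset.filter_subset _ s))

theorem forall_eq_zero_of_sum_pos_smul_eq_zero {f : ι → 𝕜} (hf_pos : ∀ i ∈ s, 0 < f i)
    (hf : ∑ i ∈ s, f i • v i = 0) (φ : Module.Dual 𝕜 V) (hφ : ∀ i ∈ s, φ (v i) ≤ 0) :
    ∀ i ∈ s, φ (v i) = 0 := by
  have hsum : ∑ i ∈ s, f i * φ (v i) = 0 := by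
    simpa only [map_sum, map_smul, smul_eq_mul, map_zero] using congrArg φ hf
  have hterm := (Finset.sum_eq_zero_iff_of_nonpos fun i hi =>
    mul_nonpos_of_nonneg_of_nonpos (hf_pos i hi).le (hφ i hi)).mp hsum
  exact fun i hi => (mul_eq_zero.mp (hterm i hi)).resolve_left (hf_pos i hi).ne'

theorem exists_orthogonal_subset_of_not_linearIndepOn [DecidableEq ι]
    (hB : B.toQuadraticMap.PosDef)
    (hobtuse : (s : Set ι).Pairwise fun i j => B (v i) (v j) ≤ 0)
    (hdep : ¬ LinearIndepOn 𝕜 v s) :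
    ∃ t ⊆ s, t.Nonempty ∧ t.card ≤ (v '' t).finrank 𝕜 + 1 ∧
      ∀ i ∈ t, ∀ j ∈ s \ t, B (v i) (v j) = 0 ∧ B (v j) (v i) = 0 := by
  obtain ⟨t, hts, hmin⟩ := exists_minimal_le_of_wellFoundedLT
    (fun t : Finset ι => ¬ LinearIndepOn 𝕜 v t) s hdep
  obtain ⟨f, hf_pos, hf⟩ := exists_pos_sum_smul_eq_zero_of_minimal hB
    (hobtuse.mono (Finset.coe_subset.mpr hts)) hmin
  have ht : t.Nonempty := by
    rw [Finset.nonempty_iff_ne_empty]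
    rintro rfl
    exact hmin.prop (by simp)
  refine ⟨t, hts, ht, card_le_finrank_add_one_of_minimal hmin, fun i hi j hj => ?_⟩
  obtain ⟨hjs, hjt⟩ := Finset.mem_sdiff.mp hj
  have hne : ∀ l ∈ t, l ≠ j := fun l hl => ne_of_mem_of_not_mem hl hjt
  exact ⟨forall_eq_zero_of_sum_pos_smul_eq_zero hf_pos hf (B.flip (v j))
      (fun l hl => hobtuse (hts hl) hjs (hne l hl)) i hi,
    forall_eq_zero_of_sum_pos_smul_eq_zero hf_pos hf (B (v j))
      (fun l hl => hobtuse hjs (hts hl) (hne l hl).symm) i hi⟩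

theorem exists_isSplitting_of_finrank_add_lt_card (hB : B.toQuadraticMap.PosDef) {k : ℕ}
    (hobtuse : (s : Set ι).Pairwise fun i j => B (v i) (v j) ≤ 0)
    (hrank : (v '' s).finrank 𝕜 + k < s.card) :
    ∃ c : ι → Fin (k + 1), IsSplitting (fun i j => B (v i) (v j) = 0) s c := by
  classical
  induction k generalizing s with
  | zero =>
    obtain ⟨i, hi⟩ := Finset.card_pos.mp (Nat.zero_lt_of_lt hrank)
    exact ⟨fun _ => 0, fun a => ⟨i, hi, (Fin.eq_zero a).symm⟩, fun _ _ _ _ h => (h rfl).elim⟩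
  | succ k ih =>
    have hdep : ¬ LinearIndepOn 𝕜 v s := fun hindep => by
      have := finrank_image_eq_card hindep
      lia
    obtain ⟨t, hts, ht, ht_card, horth⟩ :=
      exists_orthogonal_subset_of_not_linearIndepOn hB hobtuse hdep
    have hrank_add : (v '' s).finrank 𝕜 = (v '' t).finrank 𝕜 + (v '' ↑(s \ t)).finrank 𝕜 := by
      rw [← finrank_union_of_orthogonal hB.anisotropic (t.finite_toSet.image v)
          ((s \ t).finite_toSet.image v),
        ← Set.image_union, ← Finset.coe_union, Finset.union_sdiff_of_subset hts]
      rintro _ ⟨i, hi, rfl⟩ _ ⟨j, hj, rfl⟩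
      exact (horth i hi j hj).1
    have hcard := Finset.card_sdiff_add_card_eq_card hts
    obtain ⟨c, hc⟩ := ih (s := s \ t) (hobtuse.mono (by simp)) (by lia)
    exact ⟨_, hc.cons hts ht horth⟩

theorem card_mul_card_sub_one_le_sum_of_pairwise_le_neg_one (hB : B.IsNonneg)
    (hpair : (s : Set ι).Pairwise fun i j => B (v i) (v j) ≤ -1) :
    (s.card : 𝕜) * (s.card - 1) ≤ ∑ i ∈ s, B (v i) (v i) := by
  classical
  have hrow : ∀ i ∈ s, ∑ j ∈ s, B (v i) (v j) ≤ B (v i) (v i) - (s.card - 1) := by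
    intro i hi
    have herase : ∑ j ∈ s.erase i, B (v i) (v j) ≤ (s.erase i).card • (-1 : 𝕜) :=
      Finset.sum_le_card_nsmul _ _ _ fun j hj =>
        hpair hi (Finset.mem_of_mem_erase hj) (Finset.ne_of_mem_erase hj).symm
    rw [nsmul_eq_mul, Finset.cast_card_erase_of_mem hi] at herase
    rw [← Finset.add_sum_erase s _ hi]
    linarith
  have hsum : 0 ≤ ∑ i ∈ s, (B (v i) (v i) - (s.card - 1)) :=
    calc 0 ≤ B (∑ i ∈ s, v i) (∑ j ∈ s, v j) := hB.nonneg _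
      _ = ∑ i ∈ s, ∑ j ∈ s, B (v i) (v j) := by
        rw [LinearMap.BilinForm.sum_left]
        simp only [LinearMap.BilinForm.sum_right]
      _ ≤ _ := Finset.sum_le_sum hrow
  rw [Finset.sum_sub_distrib, Finset.sum_const, nsmul_eq_mul] at hsum
  linarith

theorem card_le_add_one_of_pairwise_le_neg_one (hB : B.IsNonneg) {m : ℕ}
    (hnorm : ∀ i ∈ s, B (v i) (v i) ≤ m)
    (hpair : (s : Set ι).Pairwise fun i j => B (v i) (v j) ≤ -1) : s.card ≤ m + 1 := by
  obtain rfl | hs := s.eq_empty_or_nonempty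
  · simp
  have hle : (s.card : 𝕜) * (s.card - 1) ≤ s.card * m := by
    simpa only [nsmul_eq_mul] using
      (card_mul_card_sub_one_le_sum_of_pairwise_le_neg_one hB hpair).trans
        (Finset.sum_le_card_nsmul s _ _ hnorm)
  have := le_of_mul_le_mul_left hle (Nat.cast_pos.mpr hs.card_pos)
  exact_mod_cast sub_le_iff_le_add.mp this

theorem stmt_17_general (hB : B.toQuadraticMap.PosDef) (hsymm : B.IsSymm) {m k : ℕ}
    (hnorm : ∀ i ∈ s, B (v i) (v i) ≤ m)
    (hpair : (s : Set ι).Pairwise fun i j => B (v i) (v j) = 0 ∨ B (v i) (v j) ≤ -1)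
    (hrank : (v '' s).finrank 𝕜 + k < s.card) (hcard : (k + 1) * (m + 1) < s.card) :
    ∃ t ⊆ s, t.card = k + 2 ∧ (t : Set ι).Pairwise fun i j => B (v i) (v j) = 0 := by
  classical
  have hobtuse : (s : Set ι).Pairwise fun i j => B (v i) (v j) ≤ 0 :=
    hpair.mono' fun i j h => h.elim le_of_eq fun h => h.trans (by simp)
  obtain ⟨c, hc⟩ := exists_isSplitting_of_finrank_add_lt_card hB hobtuse hrank
  obtain ⟨a, -, ha⟩ := Finset.exists_lt_card_fiber_of_mul_lt_card_of_maps_to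
    (t := Finset.univ) (fun i _ => Finset.mem_univ (c i)) (by simpa using hcard)
  obtain ⟨i, hi, j, hj, hne, hij⟩ : ∃ i ∈ ({i ∈ s | c i = a} : Finset ι),
      ∃ j ∈ ({i ∈ s | c i = a} : Finset ι), i ≠ j ∧ B (v i) (v j) = 0 := by
    by_contra! hnone
    refine ha.not_ge (card_le_add_one_of_pairwise_le_neg_one (B := B) (v := v) ⟨hB.nonneg⟩
      (fun i hi => hnorm i (Finset.mem_of_mem_filter i hi)) fun i hi j hj hne => ?_)
    exact (hpair (Finset.mem_of_mem_filter i hi) (Finset.mem_of_mem_filter j hj) hne).resolve_left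
      (hnone i hi j hj hne)
  rw [Finset.mem_filter] at hi hj
  simpa using hc.exists_subset_card_eq_pairwise hi.1 hj.1 hne
    (hi.2.trans hj.2.symm) hij (hsymm.eq _ _ ▸ hij)

end ObtuseVectors

/-- Every clique in `Γ_{-1,0}` of size greater than 10 contains four
pairwise orthogonal roots. -/
theorem stmt_17 (K : Finset (Fin 8 → ℝ)) (h : IsClique {-1, 0} K)
    (hcard : 10 < K.card) :
    ∃ s : Finset (Fin 8 → ℝ), s ⊆ K ∧ s.card = 4 ∧
      ∀ e ∈ s, ∀ f ∈ s, e ≠ f → dot e f = 0 := by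
  have hrank : (id '' (K : Set (Fin 8 → ℝ))).finrank ℝ ≤ 8 :=
    (Submodule.finrank_le _).trans_eq (Module.finrank_fin_fun ℝ)
  obtain ⟨s, hsK, hs_card, hs_orth⟩ := stmt_17_general (v := id) (m := 2) (k := 2)
    (posDef_dotProductBilin (Fin 8) ℝ) ⟨dotProduct_comm⟩ (fun e he => (h.1 e he).2.le)
    (fun e he f hf hne => (h.2 e he f hf hne).symm.imp_right le_of_eq) (by lia) (by lia)
  exact ⟨s, hsK, hs_card, fun e he f hf hne => hs_orth he hf hne⟩
end
end

section
/- Let H be a finite group acting on a finite set X, and consider the induced action of H on the subsets of X. Let A and S be subsets of X, and let m be the number of H-conjugates of A that are contained in S. Then the number of H-conjugates of S that contain A equals m·|H_A|/|H_S|. -/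
open scoped Pointwise

/-!
Count the elements `h` of the group with `A ⊆ h • S` in two ways. The set `h • S` depends only on
the coset of `h` modulo the stabilizer of `S`, so every conjugate of `S` containing `A` arises from
`|H_S|` such elements. On the other hand `A ⊆ h • S` means `h⁻¹ • A ⊆ S`, so inversion turns the
count into the analogous one for the conjugates of `A` contained in `S`.
-/

section

open MulAction

variable {G Y Z : Type*} [Group G] [MulAction G Y] [MulAction G Z]

theorem range_ofQuotientStabilizer (y : Y) :
    Set.range (ofQuotientStabilizer G y) = orbit G y := by
  ext z
  simp only [Set.mem_range, QuotientGroup.exists_mk, ofQuotientStabilizer_mk, mem_orbit_iff]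

theorem encard_preimage_ofQuotientStabilizer (y : Y) (B : Set Y) :
    (ofQuotientStabilizer G y ⁻¹' B).encard = (orbit G y ∩ B).encard := by
  rw [← (injective_ofQuotientStabilizer G y).encard_image, Set.image_preimage_eq_inter_range,
    range_ofQuotientStabilizer, Set.inter_comm]

theorem encard_preimage_quotientGroupMk (K : Subgroup G) (Q : Set (G ⧸ K)) :
    (((↑) : G → G ⧸ K) ⁻¹' Q).encard = Q.encard * ENat.card K := by
  rw [mul_comm, ← ENat.card_coe_set_eq, ← ENat.card_coe_set_eq, ← ENat.card_prod]
  exact ENat.card_congr (QuotientGroup.preimageMkEquivSubgroupProdSet K Q)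

theorem encard_setOf_smul_mem (y : Y) (B : Set Y) :
    {g : G | g • y ∈ B}.encard = (orbit G y ∩ B).encard * ENat.card (stabilizer G y) := by
  rw [← encard_preimage_ofQuotientStabilizer]
  exact encard_preimage_quotientGroupMk (stabilizer G y) (ofQuotientStabilizer G y ⁻¹' B)

theorem encard_setOf_rel_smul_right (r : Y → Z → Prop)
    (hr : ∀ (g : G) (y : Y) (z : Z), r (g • y) (g • z) ↔ r y z) (y : Y) (z : Z) :
    {g : G | r y (g • z)}.encard = {g : G | r (g • y) z}.encard :=
  Set.encard_congr <| (Equiv.inv G).subtypeEquiv fun g => by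
    simpa only [Set.mem_ofPred_eq, Equiv.inv_apply, inv_smul_smul] using (hr g⁻¹ y (g • z)).symm

/-- In `ℕ∞`, with the divisor moved to the other side, no infinite count is replaced by the junk
value `0`. -/
theorem stmt_19_general (r : Y → Z → Prop)
    (hr : ∀ (g : G) (y : Y) (z : Z), r (g • y) (g • z) ↔ r y z) (y : Y) (z : Z) :
    (orbit G z ∩ {z' | r y z'}).encard * ENat.card (stabilizer G z) =
      (orbit G y ∩ {y' | r y' z}).encard * ENat.card (stabilizer G y) :=
  calc
    _ = {g : G | r y (g • z)}.encard := (encard_setOf_smul_mem z {z' | r y z'}).symm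
    _ = {g : G | r (g • y) z}.encard := encard_setOf_rel_smul_right r hr y z
    _ = _ := encard_setOf_smul_mem y {y' | r y' z}

end

/-- Let `H` be a finite group acting on a finite set `X`, and let
`A, S ⊆ X`. If `m` is the number of `H`-conjugates of `A` contained in `S`, then
the number of `H`-conjugates of `S` containing `A` equals `m·|H_A|/|H_S|`. -/
theorem stmt_19 {H X : Type*} [Group H] [Finite H] [Finite X] [MulAction H X]
    (A S : Set X) :
    ({T : Set X | (∃ h : H, h • S = T) ∧ A ⊆ T}.ncard : ℚ) =
      ({T : Set X | (∃ h : H, h • A = T) ∧ T ⊆ S}.ncard : ℚ) *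
        (Nat.card (MulAction.stabilizer H A) : ℚ) /
        (Nat.card (MulAction.stabilizer H S) : ℚ) := by
  rw [eq_div_iff (Nat.cast_ne_zero.2 Nat.card_pos.ne')]
  have card_mul_card_eq := congrArg ENat.toNat <|
    stmt_19_general (G := H) (· ⊆ ·) (fun _ _ _ => Set.smul_set_subset_smul_set_iff) A S
  rw [ENat.toNat_mul, ENat.toNat_mul] at card_mul_card_eq
  exact_mod_cast card_mul_card_eq
end
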